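/- arXiv:1605.09701 — 3 statements merged into one kernel-verified Lean document; each statement's English description precedes it below -/
import Mathlib

section
/- Let P be the R-measure and let X be an ℝ²-valued random variable with distribution P. Then the expectation of X is E(X) = (1/2, √3/6), and the variance V := E‖X − (1/2, √3/6)‖² = ∫ ‖x − (1/2, √3/6)‖² dP(x) equals 1/6. -/
open MeasureTheory ENNReal

noncomputable section

abbrev E2 : Type := EuclideanSpace ℝ (Fin 2)

/-- The point (a, b) of the Euclidean plane. -/
def pt (a b : ℝ) : E2 := (WithLp.equiv 2 (Fin 2 → ℝ)).symm ![a, b]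

/-- S₁(x) = x/3. -/
def S1 : E2 → E2 := fun x => (3 : ℝ)⁻¹ • x

/-- S₂(x) = x/3 + (2/3, 0). -/
def S2 : E2 → E2 := fun x => (3 : ℝ)⁻¹ • x + pt (2/3) 0

/-- S₃(x) = x/3 + (1/3, √3/3). -/
def S3 : E2 → E2 := fun x => (3 : ℝ)⁻¹ • x + pt (1/3) (Real.sqrt 3 / 3)

def Smap : Fin 3 → E2 → E2 := ![S1, S2, S3]

/-- For a word ω = ω₁⋯ω_k ∈ {1,2,3}^k, the composition S_ω = S_{ω₁} ∘ ⋯ ∘ S_{ω_k}. -/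
def Sword {k : ℕ} (ω : Fin k → Fin 3) : E2 → E2 :=
  fun x => (List.ofFn fun i => Smap (ω i)).foldr (fun g y => g y) x

/-- The closed triangle with vertices (0,0), (1,0), (1/2, √3/2). -/
def Tri : Set E2 := convexHull ℝ {pt 0 0, pt 1 0, pt (1/2) (Real.sqrt 3 / 2)}

/-- The distortion error ∫ min_{a ∈ α} ‖x − a‖² dμ of a set α of points. -/
def err (μ : Measure E2) (α : Set E2) : ℝ≥0∞ :=
  ∫⁻ x, ⨅ a ∈ α, ENNReal.ofReal (‖x - a‖ ^ 2) ∂μ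

/-- The n-th quantization error V_n(μ). -/
def quantErr (μ : Measure E2) (n : ℕ) : ℝ≥0∞ :=
  ⨅ (α : Set E2) (_ : α.Finite ∧ α.ncard ≤ n), err μ α

/-- α is an optimal set of n-means for μ. -/
def IsOptimal (μ : Measure E2) (n : ℕ) (α : Set E2) : Prop :=
  α.Finite ∧ α.ncard ≤ n ∧ err μ α = quantErr μ n

theorem aux_lint (P : Measure E2) [IsProbabilityMeasure P]
    (hP : P = (3 : ℝ≥0∞)⁻¹ • (P.map S1 + P.map S2 + P.map S3))
    (f : E2 → ℝ) (hf : Continuous f) (C : ℝ) (hb : ∀ x, ‖x‖ ≤ 1 → |f x| ≤ C) (hs : ∀ᵐ x ∂P, ‖x‖ ≤ 1) :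
    Integrable f P ∧ 3 * ∫ x, f x ∂P = ∫ x, f (S1 x) ∂P + ∫ x, f (S2 x) ∂P + ∫ x, f (S3 x) ∂P := by
  have m1 : Measurable S1 := by unfold S1; fun_prop
  have m2 : Measurable S2 := by unfold S2; fun_prop
  have m3 : Measurable S3 := by unfold S3; fun_prop
  have hi : Integrable f P := by
    refine Integrable.of_bound hf.aestronglyMeasurable C ?_
    filter_upwards [hs] with x hx
    exact hb x hx
  refine ⟨hi, ?_⟩
  have h3 : Integrable f (P.map S1 + P.map S2 + P.map S3) := by
    have h4 : P.map S1 + P.map S2 + P.map S3 = (3 : ℝ≥0∞) • P := by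
      conv_rhs => rw [hP]
      rw [smul_smul, ENNReal.mul_inv_cancel (by norm_num) (by norm_num), one_smul]
    rw [h4]
    exact hi.smul_measure (by norm_num)
  have h12 := h3.left_of_add_measure
  have e1 : ∫ x, f x ∂P = ∫ x, f x ∂((3 : ℝ≥0∞)⁻¹ • (P.map S1 + P.map S2 + P.map S3)) := by
    rw [← hP]
  rw [e1, integral_smul_measure, integral_add_measure h12 h3.right_of_add_measure,
    integral_add_measure h12.left_of_add_measure h12.right_of_add_measure,
    integral_map m1.aemeasurable hf.aestronglyMeasurable,
    integral_map m2.aemeasurable hf.aestronglyMeasurable,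
    integral_map m3.aemeasurable hf.aestronglyMeasurable]
  simp

theorem aux_norm_pt (a b : ℝ) : ‖pt a b‖ = Real.sqrt (a ^ 2 + b ^ 2) := by
  simp [EuclideanSpace.norm_eq, pt]

theorem aux_supp (P : Measure E2) [IsProbabilityMeasure P]
    (hP : P = (3 : ℝ≥0∞)⁻¹ • (P.map S1 + P.map S2 + P.map S3)) :
    ∀ᵐ x ∂P, ‖x‖ ≤ 1 := by
  have m1 : Measurable S1 := by unfold S1; fun_prop
  have m2 : Measurable S2 := by unfold S2; fun_prop
  have m3 : Measurable S3 := by unfold S3; fun_prop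
  have q3 : Real.sqrt 3 ^ 2 = 3 := Real.sq_sqrt (by norm_num)
  have n0 : ∀ x : E2, ‖(3 : ℝ)⁻¹ • x‖ = ‖x‖ / 3 := by
    intro x; rw [norm_smul]; norm_num; ring
  have n1 : ∀ x, ‖S1 x‖ ≤ ‖x‖ / 3 + 2 / 3 := by
    intro x; unfold S1; rw [n0]; linarith
  have n2 : ∀ x, ‖S2 x‖ ≤ ‖x‖ / 3 + 2 / 3 := by
    intro x; unfold S2
    refine (norm_add_le _ _).trans ?_
    rw [n0, aux_norm_pt, show ((2 / 3 : ℝ) ^ 2 + 0 ^ 2) = (2 / 3) ^ 2 by ring,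
      Real.sqrt_sq (by norm_num)]
  have n3 : ∀ x, ‖S3 x‖ ≤ ‖x‖ / 3 + 2 / 3 := by
    intro x; unfold S3
    refine (norm_add_le _ _).trans ?_
    rw [n0, aux_norm_pt, show ((1 / 3 : ℝ) ^ 2 + (Real.sqrt 3 / 3) ^ 2) = (2 / 3) ^ 2 by
      rw [div_pow (Real.sqrt 3), q3]; norm_num,
      Real.sqrt_sq (by norm_num)]
  let A : ℝ → Set E2 := fun s => {x | 1 + s < ‖x‖}
  have mA : ∀ s, MeasurableSet (A s) := fun s => measurableSet_lt measurable_const measurable_norm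
  have step : ∀ s, P (A s) ≤ P (A (3 * s)) := by
    intro s
    have key : ∀ S : E2 → E2, Measurable S → (∀ x, ‖S x‖ ≤ ‖x‖ / 3 + 2 / 3) →
        P.map S (A s) ≤ P (A (3 * s)) := by
      intro S hS hn
      rw [Measure.map_apply hS (mA s)]
      apply measure_mono
      intro x hx
      have h1 : 1 + s < ‖S x‖ := hx
      have h2 := hn x
      change 1 + 3 * s < ‖x‖
      linarith
    calc P (A s) = ((3 : ℝ≥0∞)⁻¹ • (P.map S1 + P.map S2 + P.map S3)) (A s) := by rw [← hP]
      _ = (3 : ℝ≥0∞)⁻¹ * (P.map S1 (A s) + P.map S2 (A s) + P.map S3 (A s)) := by simp [mul_add]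
      _ ≤ (3 : ℝ≥0∞)⁻¹ * (P (A (3 * s)) + P (A (3 * s)) + P (A (3 * s))) := by
        exact mul_le_mul_right (add_le_add (add_le_add (key _ m1 n1) (key _ m2 n2)) (key _ m3 n3)) _
      _ = P (A (3 * s)) := by
        rw [show P (A (3 * s)) + P (A (3 * s)) + P (A (3 * s)) = 3 * P (A (3 * s)) by ring,
          ← mul_assoc, ENNReal.inv_mul_cancel (by norm_num) (by norm_num), one_mul]
  have stepn : ∀ (n : ℕ) s, P (A s) ≤ P (A (3 ^ n * s)) := by
    intro n
    induction n with
    | zero => intro s; simp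
    | succ k ih =>
      intro s
      refine (ih s).trans ((step _).trans (le_of_eq ?_))
      congr 2; ring
  have zero : ∀ s, 0 < s → P (A s) = 0 := by
    intro s hs
    have ht := tendsto_measure_iInter_atTop (μ := P) (s := fun n : ℕ => A (n * s))
      (fun n => (mA _).nullMeasurableSet)
      (by
        intro m n hmn x hx
        have h1 : 1 + n * s < ‖x‖ := hx
        have h2 : (m : ℝ) * s ≤ n * s := by gcongr
        change 1 + m * s < ‖x‖
        linarith) ⟨0, measure_ne_top _ _⟩
    have hemp : (⋂ n : ℕ, A (n * s)) = ∅ := by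
      ext x
      simp only [Set.mem_iInter, Set.mem_empty_iff_false, iff_false, not_forall]
      obtain ⟨n, hn⟩ := exists_nat_gt (‖x‖ / s)
      refine ⟨n, fun h => ?_⟩
      have h1 : 1 + n * s < ‖x‖ := h
      rw [div_lt_iff₀ hs] at hn
      linarith
    rw [hemp, measure_empty] at ht
    refine le_antisymm (ge_of_tendsto' ht fun n => (stepn n s).trans (measure_mono ?_)) bot_le
    intro x hx
    have h1 : 1 + 3 ^ n * s < ‖x‖ := hx
    have h2 : (n : ℝ) ≤ 3 ^ n := by
      exact_mod_cast (Nat.lt_pow_self (by norm_num : 1 < 3)).le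
    have h3 : (n : ℝ) * s ≤ 3 ^ n * s := by gcongr
    change 1 + n * s < ‖x‖
    linarith
  have hall : ∀ n : ℕ, ∀ᵐ x ∂P, ‖x‖ ≤ 1 + 1 / ((n : ℝ) + 1) := by
    intro n
    rw [ae_iff]
    simpa [A] using zero (1 / ((n : ℝ) + 1)) (by positivity)
  rw [← ae_all_iff] at hall
  filter_upwards [hall] with x hx
  refine le_of_forall_pos_le_add fun ε hε => ?_
  obtain ⟨n, hn⟩ := exists_nat_one_div_lt hε
  linarith [hx n]

theorem stmt_2 (P : Measure E2) [IsProbabilityMeasure P]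
    (hP : P = (3 : ℝ≥0∞)⁻¹ • (P.map S1 + P.map S2 + P.map S3)) :
    (∫ x, x ∂P) = pt (1/2) (Real.sqrt 3 / 6)
      ∧ (∫ x, ‖x - pt (1/2) (Real.sqrt 3 / 6)‖ ^ 2 ∂P) = 1 / 6 := by
  have q3 : Real.sqrt 3 ^ 2 = 3 := Real.sq_sqrt (by norm_num)
  have hs := aux_supp P hP
  have hc : ∀ (x : E2) (i : Fin 2), ‖x‖ ≤ 1 → |x i| ≤ 1 := fun x i hx =>
    (PiLp.norm_apply_le x i).trans hx
  obtain ⟨i0, e0⟩ := aux_lint P hP (fun x => x 0) (by fun_prop) 1 (fun x hx => hc x 0 hx) hs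
  obtain ⟨i1, e1⟩ := aux_lint P hP (fun x => x 1) (by fun_prop) 1 (fun x hx => hc x 1 hx) hs
  obtain ⟨i2, e2⟩ := aux_lint P hP (fun x => x 0 ^ 2 + x 1 ^ 2) (by fun_prop) 2 (fun x hx => by
    have h0 := (sq_le_one_iff_abs_le_one _).2 (hc x 0 hx)
    have h1 := (sq_le_one_iff_abs_le_one _).2 (hc x 1 hx)
    rw [abs_of_nonneg (by positivity)]; linarith) hs
  have lin : ∀ a b c d : ℝ, ∫ x : E2, (a * (x 0 ^ 2 + x 1 ^ 2) + b * x 0 + c * x 1 + d) ∂P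
      = a * (∫ x : E2, (x 0 ^ 2 + x 1 ^ 2) ∂P) + b * (∫ x : E2, x 0 ∂P)
        + c * (∫ x : E2, x 1 ∂P) + d := by
    intro a b c d
    have j2 := i2.const_mul a
    have j0 := i0.const_mul b
    have j1 := i1.const_mul c
    have j20 : Integrable (fun x : E2 => a * (x 0 ^ 2 + x 1 ^ 2) + b * x 0) P := j2.add j0
    have j201 : Integrable (fun x : E2 => a * (x 0 ^ 2 + x 1 ^ 2) + b * x 0 + c * x 1) P :=
      j20.add j1
    rw [integral_add j201 (integrable_const d), integral_add j20 j1, integral_add j2 j0,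
      integral_const_mul, integral_const_mul, integral_const_mul]
    simp
  have lin' : ∀ (f : E2 → ℝ) (a b c d : ℝ),
      (∀ x, f x = a * (x 0 ^ 2 + x 1 ^ 2) + b * x 0 + c * x 1 + d) → ∫ x, f x ∂P
      = a * (∫ x : E2, (x 0 ^ 2 + x 1 ^ 2) ∂P) + b * (∫ x : E2, x 0 ∂P)
        + c * (∫ x : E2, x 1 ∂P) + d := by
    intro f a b c d h
    rw [← lin, integral_congr_ae (Filter.Eventually.of_forall h)]
  rw [lin' (fun x => S1 x 0) 0 (1/3) 0 0 (by intro x; simp [S1]),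
    lin' (fun x => S2 x 0) 0 (1/3) 0 (2/3) (by intro x; simp [S2, pt]),
    lin' (fun x => S3 x 0) 0 (1/3) 0 (1/3) (by intro x; simp [S3, pt])] at e0
  rw [lin' (fun x => S1 x 1) 0 0 (1/3) 0 (by intro x; simp [S1]),
    lin' (fun x => S2 x 1) 0 0 (1/3) 0 (by intro x; simp [S2, pt]),
    lin' (fun x => S3 x 1) 0 0 (1/3) (Real.sqrt 3/3) (by intro x; simp [S3, pt])] at e1
  rw [lin' (fun x => S1 x 0 ^ 2 + S1 x 1 ^ 2) (1/9) 0 0 0 (by intro x; simp [S1]; ring),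
    lin' (fun x => S2 x 0 ^ 2 + S2 x 1 ^ 2) (1/9) (4/9) 0 (4/9)
      (by intro x; simp [S2, pt]; ring),
    lin' (fun x => S3 x 0 ^ 2 + S3 x 1 ^ 2) (1/9) (2/9) (2/9 * Real.sqrt 3) (4/9)
      (by intro x; simp [S3, pt]; linear_combination (1/9) * q3)] at e2
  have E0 : ∫ x : E2, x 0 ∂P = 1 / 2 := by linarith
  have E1 : ∫ x : E2, x 1 ∂P = Real.sqrt 3 / 6 := by linarith
  have hid : Integrable (fun x : E2 => x) P := by
    refine Integrable.of_bound (by fun_prop) 1 ?_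
    exact hs
  constructor
  · have hp : ∀ i, (∫ x, x ∂P) i = ∫ x : E2, x i ∂P := fun i =>
      ((EuclideanSpace.proj i : E2 →L[ℝ] ℝ).integral_comp_comm hid).symm
    ext i
    rw [hp]
    fin_cases i
    · simpa [pt] using E0
    · simpa [pt] using E1
  · rw [lin' _ 1 (-1) (-(Real.sqrt 3 / 3)) (1/3) (by
      intro x
      rw [EuclideanSpace.norm_sq_eq]
      simp [pt]
      linear_combination (1/36) * q3)]
    rw [E0, E1] at e2
    rw [E0, E1]
    linear_combination (3/8) * e2 + (-1/24) * q3

end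
end

section
/- Let P be the R-measure, c = (1/2, √3/6), and k ≥ 1. For every word ω ∈ {1,2,3}^k and every point b ∈ ℝ², one has ∫_{△_ω} ‖x − b‖² dP(x) = (1/3^k) · ( (1/9^k)·(1/6) + ‖S_ω(c) − b‖² ), where △_ω = S_ω(△) and △ is the closed triangle with vertices (0,0), (1,0), (1/2, √3/2) (the convex hull of these three points). -/
open MeasureTheory ENNReal

noncomputable section

def vtx : Fin 3 → E2 := ![pt 0 0, pt 1 0, pt (1/2) (Real.sqrt 3 / 2)]

lemma pt_zero (a b : ℝ) : pt a b 0 = a := by simp [pt]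
lemma pt_one (a b : ℝ) : pt a b 1 = b := by simp [pt]

lemma Smap_eq (j : Fin 3) (x : E2) : Smap j x = (1/3 : ℝ) • x + (2/3 : ℝ) • vtx j := by
  fin_cases j <;> ext i <;> fin_cases i <;>
    simp [Smap, S1, S2, S3, vtx, pt] <;> ring

lemma Smap_cont (j : Fin 3) : Continuous (Smap j) := by
  have : Smap j = fun x => (1/3 : ℝ) • x + (2/3 : ℝ) • vtx j := funext (Smap_eq j)
  rw [this]; fun_prop

lemma Smap_inj (j : Fin 3) : Function.Injective (Smap j) := by
  intro x y h
  rw [Smap_eq, Smap_eq] at h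
  exact smul_right_injective E2 (by norm_num : (1/3 : ℝ) ≠ 0) (add_right_cancel h)

lemma vtx_mem (j : Fin 3) : vtx j ∈ Tri := by
  apply subset_convexHull
  fin_cases j <;> simp [vtx]

lemma Tri_compact : IsCompact Tri := by
  apply Set.Finite.isCompact_convexHull
  simp

lemma Smap_mem (j : Fin 3) {x : E2} (hx : x ∈ Tri) : Smap j x ∈ Tri := by
  rw [Smap_eq]
  exact (convex_convexHull ℝ _) hx (vtx_mem j) (by norm_num) (by norm_num) (by norm_num)

lemma Tri_bounds {x : E2} (hx : x ∈ Tri) :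
    0 ≤ x 0 ∧ x 0 ≤ 1 ∧ 0 ≤ x 1 ∧ x 1 ≤ Real.sqrt 3 / 2 := by
  have hs : 0 ≤ Real.sqrt 3 := Real.sqrt_nonneg 3
  have : Tri ⊆ {x : E2 | 0 ≤ x 0 ∧ x 0 ≤ 1 ∧ 0 ≤ x 1 ∧ x 1 ≤ Real.sqrt 3 / 2} := by
    apply convexHull_min
    · intro y hy
      simp only [Set.mem_insert_iff, Set.mem_singleton_iff] at hy
      rcases hy with rfl | rfl | rfl <;>
        simp only [Set.mem_ofPred_eq, pt_zero, pt_one] <;>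
        refine ⟨?_, ?_, ?_, ?_⟩ <;> first | positivity | norm_num
    · intro y hy z hz a b ha hb hab
      obtain ⟨h1, h2, h3, h4⟩ := hy
      obtain ⟨g1, g2, g3, g4⟩ := hz
      have hb' : b = 1 - a := by linarith
      simp only [Set.mem_ofPred_eq, PiLp.add_apply, PiLp.smul_apply, smul_eq_mul]
      refine ⟨by positivity, ?_, by positivity, ?_⟩
      · nlinarith [mul_le_mul_of_nonneg_left h2 ha, mul_le_mul_of_nonneg_left g2 hb]
      · calc a * y 1 + b * z 1 ≤ a * (Real.sqrt 3 / 2) + b * (Real.sqrt 3 / 2) := by gcongr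
          _ = Real.sqrt 3 / 2 := by rw [← add_mul, hab, one_mul]
  exact this hx

lemma Smap_disj {i j : Fin 3} (hij : i ≠ j) {x y : E2} (hx : x ∈ Tri) (hy : y ∈ Tri) :
    Smap i x ≠ Smap j y := by
  intro h
  rw [Smap_eq, Smap_eq] at h
  have hs : 0 < Real.sqrt 3 := by positivity
  obtain ⟨h1, h2, h3, h4⟩ := Tri_bounds hx
  obtain ⟨g1, g2, g3, g4⟩ := Tri_bounds hy
  have e0 := congrArg (fun z : E2 => z 0) h
  have e1 := congrArg (fun z : E2 => z 1) h
  fin_cases i <;> fin_cases j <;> simp [vtx, pt] at hij e0 e1 <;> linarith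

lemma Sword_succ {k : ℕ} (ω : Fin (k+1) → Fin 3) (x : E2) :
    Sword ω x = Smap (ω 0) (Sword (fun i => ω i.succ) x) := by
  simp [Sword, List.ofFn_succ]

lemma Sword_zero (ω : Fin 0 → Fin 3) (x : E2) : Sword ω x = x := by
  simp [Sword]

lemma Sword_aff : ∀ {k : ℕ} (ω : Fin k → Fin 3), ∃ t : E2, ∀ x, Sword ω x = (1/3^k : ℝ) • x + t
  | 0, ω => ⟨0, fun x => by simp [Sword_zero]⟩
  | k+1, ω => by
    obtain ⟨t, ht⟩ := Sword_aff (fun i => ω i.succ)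
    refine ⟨(1/3 : ℝ) • t + (2/3 : ℝ) • vtx (ω 0), fun x => ?_⟩
    rw [Sword_succ, Smap_eq, ht, smul_add, smul_smul, add_assoc]
    congr 2
    rw [pow_succ]; field_simp

lemma Sword_cont {k : ℕ} (ω : Fin k → Fin 3) : Continuous (Sword ω) := by
  obtain ⟨t, ht⟩ := Sword_aff ω
  have : Sword ω = fun x => (1/3^k : ℝ) • x + t := funext ht
  rw [this]; fun_prop

lemma Sword_mem : ∀ {k : ℕ} (ω : Fin k → Fin 3) {x : E2}, x ∈ Tri → Sword ω x ∈ Tri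
  | 0, ω, x, hx => by rwa [Sword_zero]
  | k+1, ω, x, hx => by
    rw [Sword_succ]; exact Smap_mem _ (Sword_mem _ hx)

def RM (P : Measure E2) : Prop :=
  P = (3 : ℝ≥0∞)⁻¹ • (P.map (Smap 0) + P.map (Smap 1) + P.map (Smap 2))

lemma RM.apply {P : Measure E2} (hP : RM P) {A : Set E2} (hA : MeasurableSet A) :
    P A = (3 : ℝ≥0∞)⁻¹ * (P (Smap 0 ⁻¹' A) + P (Smap 1 ⁻¹' A) + P (Smap 2 ⁻¹' A)) := by
  have h := congrArg (fun μ : Measure E2 => μ A) hP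
  simp only [Measure.smul_apply, Measure.add_apply, smul_eq_mul] at h
  rw [Measure.map_apply (Smap_cont 0).measurable hA, Measure.map_apply (Smap_cont 1).measurable hA,
    Measure.map_apply (Smap_cont 2).measurable hA] at h
  exact h

lemma third_add (a : ℝ≥0∞) : (3 : ℝ≥0∞)⁻¹ * (a + a + a) = a := by
  have : a + a + a = 3 * a := by ring
  rw [this, ← mul_assoc, ENNReal.inv_mul_cancel (by norm_num) (by norm_num), one_mul]

lemma infDist_Smap (j : Fin 3) (x : E2) :
    Metric.infDist (Smap j x) Tri ≤ Metric.infDist x Tri / 3 := by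
  have hne : Tri.Nonempty := ⟨_, vtx_mem 0⟩
  obtain ⟨y, hy, hxy⟩ := Tri_compact.exists_infDist_eq_dist hne x
  refine (Metric.infDist_le_dist_of_mem (Smap_mem j hy)).trans ?_
  rw [hxy, Smap_eq, Smap_eq, dist_add_right, dist_smul₀]
  norm_num
  linarith

lemma RM.tail {P : Measure E2} (hP : RM P) (t : ℝ) :
    P {x | t < Metric.infDist x Tri} ≤ P {x | 3 * t < Metric.infDist x Tri} := by
  have hm : MeasurableSet {x : E2 | t < Metric.infDist x Tri} :=
    measurableSet_lt measurable_const (Metric.continuous_infDist_pt _).measurable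
  have key : ∀ j, P (Smap j ⁻¹' {x | t < Metric.infDist x Tri})
      ≤ P {x | 3 * t < Metric.infDist x Tri} := by
    intro j
    apply measure_mono
    intro x hx
    simp only [Set.mem_preimage, Set.mem_ofPred_eq] at hx ⊢
    linarith [infDist_Smap j x]
  rw [hP.apply hm]
  refine le_trans ?_ (third_add _).le
  exact mul_le_mul_right (add_le_add (add_le_add (key 0) (key 1)) (key 2)) _

lemma RM.tail_zero {P : Measure E2} [IsProbabilityMeasure P] (hP : RM P) {t : ℝ} (ht : 0 < t) :
    P {x | t < Metric.infDist x Tri} = 0 := by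
  have h1 : ∀ n : ℕ, P {x | t < Metric.infDist x Tri} ≤ P {x | 3^n * t < Metric.infDist x Tri} := by
    intro n
    induction n with
    | zero => simp
    | succ n ih =>
      refine ih.trans ((hP.tail _).trans (le_of_eq ?_))
      rw [← mul_assoc, ← pow_succ']
  have hlim : Filter.Tendsto (fun n : ℕ => P {x | 3^n * t < Metric.infDist x Tri}) Filter.atTop
      (nhds (P (⋂ n : ℕ, {x | 3^n * t < Metric.infDist x Tri}))) := by
    apply tendsto_measure_iInter_atTop
    · intro n
      exact (measurableSet_lt measurable_const
        (Metric.continuous_infDist_pt _).measurable).nullMeasurableSet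
    · intro m n hmn x hx
      simp only [Set.mem_ofPred_eq] at hx ⊢
      refine lt_of_le_of_lt ?_ hx
      gcongr
      norm_num
    · exact ⟨0, measure_ne_top _ _⟩
  have hemp : (⋂ n : ℕ, {x : E2 | 3^n * t < Metric.infDist x Tri}) = ∅ := by
    ext x
    simp only [Set.mem_iInter, Set.mem_ofPred_eq, Set.mem_empty_iff_false, iff_false, not_forall,
      not_lt]
    obtain ⟨n, hn⟩ := pow_unbounded_of_one_lt (Metric.infDist x Tri / t) (by norm_num : (1:ℝ) < 3)
    exact ⟨n, ((div_lt_iff₀ ht).1 hn).le⟩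
  rw [hemp, measure_empty] at hlim
  exact le_antisymm (ge_of_tendsto' hlim h1) bot_le

lemma RM.ae_mem {P : Measure E2} [IsProbabilityMeasure P] (hP : RM P) : ∀ᵐ x ∂P, x ∈ Tri := by
  have hne : Tri.Nonempty := ⟨_, vtx_mem 0⟩
  have h : ∀ᵐ x ∂P, ∀ n : ℕ, Metric.infDist x Tri ≤ 1 / ((n : ℝ) + 1) := by
    rw [ae_all_iff]
    intro n
    rw [ae_iff]
    simpa only [not_le] using hP.tail_zero (t := 1 / ((n : ℝ) + 1)) (by positivity)
  filter_upwards [h] with x hx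
  rw [Tri_compact.isClosed.mem_iff_infDist_zero hne]
  refine le_antisymm ?_ Metric.infDist_nonneg
  exact ge_of_tendsto' tendsto_one_div_add_atTop_nhds_zero_nat hx

lemma RM.restrict_Smap {P : Measure E2} [IsProbabilityMeasure P] (hP : RM P) (j : Fin 3)
    {B : Set E2} (hB : B ⊆ Tri) (hBc : IsCompact B) :
    P.restrict (Smap j '' B) = (3 : ℝ≥0∞)⁻¹ • (P.restrict B).map (Smap j) := by
  ext A hA
  have hSB : MeasurableSet (Smap j '' B) := (hBc.image (Smap_cont j)).measurableSet
  rw [Measure.restrict_apply hA, Measure.smul_apply, smul_eq_mul,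
    Measure.map_apply (Smap_cont j).measurable hA,
    Measure.restrict_apply ((Smap_cont j).measurable hA), hP.apply (hA.inter hSB)]
  have h0 : ∀ i, i ≠ j → P (Smap i ⁻¹' (A ∩ Smap j '' B)) = 0 := by
    intro i hij
    refine measure_mono_null ?_ (ae_iff.1 hP.ae_mem)
    rintro x ⟨-, y, hy, hxy⟩ hx
    exact Smap_disj hij hx (hB hy) hxy.symm
  have h1 : Smap j ⁻¹' (A ∩ Smap j '' B) = Smap j ⁻¹' A ∩ B := by
    rw [Set.preimage_inter, Set.preimage_image_eq _ (Smap_inj j)]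
  congr 1
  rw [← h1]
  obtain rfl | rfl | rfl : j = 0 ∨ j = 1 ∨ j = 2 := by
    fin_cases j <;> simp
  · rw [h0 1 (by decide), h0 2 (by decide), add_zero, add_zero]
  · rw [h0 0 (by decide), h0 2 (by decide), zero_add, add_zero]
  · rw [h0 0 (by decide), h0 1 (by decide), zero_add, zero_add]

lemma RM.restrict_Sword {P : Measure E2} [IsProbabilityMeasure P] (hP : RM P) :
    ∀ {k : ℕ} (ω : Fin k → Fin 3),
      P.restrict (Sword ω '' Tri) = ((3 : ℝ≥0∞)⁻¹ ^ k) • P.map (Sword ω)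
  | 0, ω => by
    have : Sword ω = id := funext (Sword_zero ω)
    rw [this, Set.image_id, Measure.map_id, pow_zero, one_smul,
      Measure.restrict_eq_self_of_ae_mem hP.ae_mem]
  | k+1, ω => by
    have : Sword ω = Smap (ω 0) ∘ Sword (fun i => ω i.succ) := funext (Sword_succ ω)
    rw [this, Set.image_comp, hP.restrict_Smap, hP.restrict_Sword, Measure.map_smul, smul_smul,
      Measure.map_map (Smap_cont _).measurable (Sword_cont _).measurable, pow_succ']
    · rintro _ ⟨x, hx, rfl⟩
      exact Sword_mem _ hx
    · exact Tri_compact.image (Sword_cont _)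

lemma RM.integrable {P : Measure E2} [IsProbabilityMeasure P] (hP : RM P) {F : Type*}
    [NormedAddCommGroup F] [SecondCountableTopology F] [MeasurableSpace F] [BorelSpace F]
    {f : E2 → F} (hf : Continuous f) : Integrable f P := by
  have := hf.continuousOn.integrableOn_compact (μ := P) Tri_compact
  rwa [IntegrableOn, Measure.restrict_eq_self_of_ae_mem hP.ae_mem] at this

lemma RM.integral {P : Measure E2} [IsProbabilityMeasure P] (hP : RM P) {f : E2 → ℝ}
    (hf : Continuous f) : ∫ x, f x ∂P = (1/3) *
      (∫ x, f (Smap 0 x) ∂P + ∫ x, f (Smap 1 x) ∂P + ∫ x, f (Smap 2 x) ∂P) := by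
  have hi : ∀ j, Integrable f (P.map (Smap j)) := fun j =>
    (integrable_map_measure hf.aestronglyMeasurable (Smap_cont j).aemeasurable).2
      (hP.integrable (hf.comp (Smap_cont j)))
  have hm : ∀ j, ∫ x, f x ∂(P.map (Smap j)) = ∫ x, f (Smap j x) ∂P := fun j =>
    integral_map (Smap_cont j).aemeasurable hf.aestronglyMeasurable
  have h : ∫ x, f x ∂P =
    ∫ x, f x ∂((3 : ℝ≥0∞)⁻¹ • (P.map (Smap 0) + P.map (Smap 1) + P.map (Smap 2))) :=
    congrArg (fun μ : Measure E2 => ∫ x, f x ∂μ) hP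
  rw [h, integral_smul_measure, integral_add_measure ((hi 0).add_measure (hi 1)) (hi 2),
    integral_add_measure (hi 0) (hi 1), hm, hm, hm]
  simp

def cen : E2 := pt (1/2) (Real.sqrt 3 / 6)

lemma sum_vtx (w : E2) :
    inner ℝ (vtx 0 - cen) w + inner ℝ (vtx 1 - cen) w + inner ℝ (vtx 2 - cen) w = (0 : ℝ) := by
  rw [← inner_add_left, ← inner_add_left]
  have : vtx 0 - cen + (vtx 1 - cen) + (vtx 2 - cen) = 0 := by
    ext i; fin_cases i <;> simp [vtx, cen, pt] <;> ring
  rw [this, inner_zero_left]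

lemma norm_vtx (j : Fin 3) : ‖vtx j - cen‖ ^ 2 = 1/3 := by
  have hs : Real.sqrt 3 ^ 2 = 3 := Real.sq_sqrt (by norm_num)
  rw [EuclideanSpace.norm_sq_eq, Fin.sum_univ_two]
  fin_cases j <;> simp [vtx, cen, pt, div_pow] <;> nlinarith

lemma Smap_cen (j : Fin 3) (x : E2) :
    Smap j x - cen = (1/3 : ℝ) • (x - cen) + (2/3 : ℝ) • (vtx j - cen) := by
  rw [Smap_eq]; module

lemma RM.mean {P : Measure E2} [IsProbabilityMeasure P] (hP : RM P) (w : E2) :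
    ∫ x, (inner ℝ (x - cen) w : ℝ) ∂P = 0 := by
  have hc : Continuous fun x : E2 => (inner ℝ (x - cen) w : ℝ) := by fun_prop
  have h := hP.integral hc
  have hj : ∀ j, ∫ x, (inner ℝ (Smap j x - cen) w : ℝ) ∂P
      = (1/3) * ∫ x, (inner ℝ (x - cen) w : ℝ) ∂P + (2/3) * inner ℝ (vtx j - cen) w := by
    intro j
    simp_rw [Smap_cen, inner_add_left, real_inner_smul_left]
    rw [integral_add ((hP.integrable hc).const_mul _) (integrable_const _),
      integral_const_mul]
    simp
  rw [hj, hj, hj] at h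
  linarith [sum_vtx w]

lemma RM.expand {P : Measure E2} [IsProbabilityMeasure P] (hP : RM P) (r : ℝ) (w : E2) :
    ∫ x, ‖r • (x - cen) + w‖ ^ 2 ∂P = r ^ 2 * ∫ x, ‖x - cen‖ ^ 2 ∂P + ‖w‖ ^ 2 := by
  have hc : Continuous fun x : E2 => (inner ℝ (x - cen) w : ℝ) := by fun_prop
  have hn : Continuous fun x : E2 => ‖x - cen‖ ^ 2 := by fun_prop
  have e : ∀ x : E2, ‖r • (x - cen) + w‖ ^ 2
      = r ^ 2 * ‖x - cen‖ ^ 2 + (2 * r) * inner ℝ (x - cen) w + ‖w‖ ^ 2 := by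
    intro x
    rw [norm_add_sq_real, norm_smul, real_inner_smul_left, mul_pow, Real.norm_eq_abs, sq_abs]
    ring
  simp_rw [e]
  have hi : Integrable (fun x : E2 => r ^ 2 * ‖x - cen‖ ^ 2 + (2 * r) * inner ℝ (x - cen) w) P :=
    ((hP.integrable hn).const_mul _).add ((hP.integrable hc).const_mul _)
  rw [integral_add hi (integrable_const _), integral_add ((hP.integrable hn).const_mul _)
    ((hP.integrable hc).const_mul _), integral_const_mul, integral_const_mul, hP.mean]
  simp

lemma RM.var {P : Measure E2} [IsProbabilityMeasure P] (hP : RM P) :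
    ∫ x, ‖x - cen‖ ^ 2 ∂P = 1/6 := by
  have hn : Continuous fun x : E2 => ‖x - cen‖ ^ 2 := by fun_prop
  have h := hP.integral hn
  have hj : ∀ j, ‖(2/3 : ℝ) • (vtx j - cen)‖ ^ 2 = 4/27 := by
    intro j
    rw [norm_smul, mul_pow, norm_vtx]; norm_num
  simp only [Smap_cen, hP.expand, hj] at h
  linarith

/-- For the R-measure P, c = (1/2, √3/6), k ≥ 1, ω ∈ {1,2,3}^k, and b ∈ ℝ²:
∫_{△_ω} ‖x − b‖² dP = (1/3^k)((1/9^k)(1/6) + ‖S_ω(c) − b‖²). -/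
theorem stmt_3 (P : Measure E2) [IsProbabilityMeasure P]
    (hP : P = (3 : ℝ≥0∞)⁻¹ • (P.map S1 + P.map S2 + P.map S3))
    (k : ℕ) (hk : 1 ≤ k) (ω : Fin k → Fin 3) (b : E2) :
    ∫ x in Sword ω '' Tri, ‖x - b‖ ^ 2 ∂P
      = (1 / 3 ^ k : ℝ) * ((1 / 9 ^ k) * (1 / 6)
          + ‖Sword ω (pt (1/2) (Real.sqrt 3 / 6)) - b‖ ^ 2) := by
  have hR : RM P := hP
  obtain ⟨t, ht⟩ := Sword_aff ω
  have hc : Continuous fun x : E2 => ‖x - b‖ ^ 2 := by fun_prop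
  rw [hR.restrict_Sword, integral_smul_measure,
    integral_map (Sword_cont ω).aemeasurable hc.aestronglyMeasurable]
  have e : ∀ x, Sword ω x - b = (1/3^k : ℝ) • (x - cen) + (Sword ω cen - b) := by
    intro x
    rw [ht, ht]; module
  have h := hR.expand (1/3^k) (Sword ω cen - b)
  simp_rw [← e] at h
  rw [h, hR.var]
  have h9 : ((1 : ℝ) / 3 ^ k) ^ 2 = 1 / 9 ^ k := by
    rw [div_pow, one_pow, ← pow_mul, mul_comm k 2, pow_mul]; norm_num
  rw [h9]
  simp [cen]

end
end

section
/- Let P be the R-measure. The sets {(1/6, 1/(6√3)), (2/3, 2/(3√3))} and {(5/6, 1/(6√3)), (1/3, 2/(3√3))} are each optimal sets of two-means for P, with quantization error V₂(P) = 5/54. -/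
open MeasureTheory ENNReal

noncomputable section

namespace RM

/-- centred first coordinate -/
def U (x : E2) : ℝ := x 0 - 1/2

/-- centred second coordinate -/
def V (x : E2) : ℝ := x 1 - Real.sqrt 3 / 6

def cen : E2 := pt (1/2) (Real.sqrt 3 / 6)

@[simp] lemma pt0 (a b : ℝ) : (pt a b) 0 = a := rfl

@[simp] lemma pt1 (a b : ℝ) : (pt a b) 1 = b := rfl

lemma normsq (x : E2) : ‖x‖ ^ 2 = x 0 ^ 2 + x 1 ^ 2 := by
  rw [EuclideanSpace.norm_sq_eq]; simp [Fin.sum_univ_two]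

lemma normsq_cen (x : E2) : ‖x - cen‖ ^ 2 = U x ^ 2 + V x ^ 2 := by
  rw [normsq]; simp [cen, U, V]

lemma contU : Continuous U := by unfold U; fun_prop

lemma contV : Continuous V := by unfold V; fun_prop

lemma contS1 : Continuous S1 := by unfold S1; fun_prop

lemma contS2 : Continuous S2 := by unfold S2; fun_prop

lemma contS3 : Continuous S3 := by unfold S3; fun_prop

lemma US1 (x : E2) : U (S1 x) = U x / 3 - 1/3 := by simp [U, S1]; ring

lemma US2 (x : E2) : U (S2 x) = U x / 3 + 1/3 := by simp [U, S2]; ring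

lemma US3 (x : E2) : U (S3 x) = U x / 3 := by simp [U, S3]; ring

lemma VS1 (x : E2) : V (S1 x) = V x / 3 - Real.sqrt 3 / 9 := by simp [V, S1]; ring

lemma VS2 (x : E2) : V (S2 x) = V x / 3 - Real.sqrt 3 / 9 := by simp [V, S2]; ring

lemma VS3 (x : E2) : V (S3 x) = V x / 3 + 2 * Real.sqrt 3 / 9 := by simp [V, S3]; ring

lemma s3 : Real.sqrt 3 ^ 2 = 3 := Real.sq_sqrt (by norm_num)

lemma s3pos : 0 < Real.sqrt 3 := Real.sqrt_pos.mpr (by norm_num)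

/-- a contraction estimate for the norm from coordinates -/
lemma contr (x y : E2) (p q : ℝ) (hU : U y = U x / 3 + p) (hV : V y = V x / 3 + q)
    (hpq : p ^ 2 + q ^ 2 = 4/27) :
    ‖y - cen‖ ≤ ‖x - cen‖ / 3 + 2 * Real.sqrt 3 / 9 := by
  have e : y - cen = (3:ℝ)⁻¹ • (x - cen) + pt p q := by
    ext i
    fin_cases i
    · simp [U, cen] at hU ⊢; linarith
    · simp [V, cen] at hV ⊢; linarith
  rw [e]
  refine (norm_add_le _ _).trans ?_
  have h2 : ‖pt p q‖ ≤ 2 * Real.sqrt 3 / 9 := by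
    apply abs_le_of_sq_le_sq' _ (by positivity) |>.2
    rw [normsq]; simp; nlinarith [s3]
  rw [norm_smul]; norm_num; linarith

/-- the majorant -/
def G (y : ℝ) : ℝ := if |y| < 1 then (1 + |y|) / 2 else |y|

/-- two small -/
lemma two_small (x y z : ℝ) (h : (x-y)^2+(y-z)^2+(x-z)^2 = 18) (hx : |x| < 1) (hy : |y| < 1)
    (hz : 1 ≤ |z|) :
    ((1 + |x|)/2 + (1+|y|)/2 + |z|)^2 ≤ 3 * (x^2+y^2+z^2) := by
  have hz2 : 2 ≤ |z| := by
    by_contra hc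
    push Not at hc
    rw [abs_lt] at hx hy
    rcases abs_cases z with ⟨h1, h2⟩ | ⟨h1, h2⟩
    · rw [h1] at hc hz
      nlinarith [mul_pos (by linarith : 0 < 3 - (z - x)) (by linarith : 0 < z - y + (z-x)), mul_nonneg (by linarith : 0 ≤ z - x) (by linarith : 0 ≤ z - y), mul_nonneg (by linarith : 0 ≤ z - y) (by linarith : 0 ≤ 3 - (z - y))]
    · rw [h1] at hc hz
      nlinarith [mul_pos (by linarith : 0 < 3 + (z - x)) (by linarith : 0 < -(z - y) - (z-x)), mul_nonneg (by linarith : 0 ≤ x-z) (by linarith : 0 ≤ y-z), mul_nonneg (by linarith : 0 ≤ y-z) (by linarith : 0 ≤ 3 - (y-z))]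
  rw [← sq_abs x, ← sq_abs y, ← sq_abs z]
  have hx0 := abs_nonneg x
  have hy0 := abs_nonneg y
  generalize |x| = a at *
  generalize |y| = b at *
  generalize |z| = c at *
  nlinarith [sq_nonneg (a-b), sq_nonneg (3*a-1), sq_nonneg (3*b-1), mul_nonneg (by linarith : 0 ≤ c - (1+a)/2 - 1) (by linarith : 0 ≤ c - (1+a)/2 + 1),
   mul_nonneg (by linarith : 0 ≤ c - (1+b)/2 - 1) (by linarith : 0 ≤ c - (1+b)/2 + 1)]

/-- one small, nonneg, with core data -/
lemma one_small_opp (s u v : ℝ) (h : (s-u)^2+(u+v)^2+(s+v)^2 = 18) (hs0 : 0 ≤ s) (hs : s < 1)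
    (hu : 1 ≤ u) (hv : 1 ≤ v) : ((1 + s)/2 + u + v)^2 ≤ 3 * (s^2+u^2+v^2) := by
  obtain ⟨m, d, rfl, rfl⟩ : ∃ m d, u = m + d ∧ v = m - d :=
    ⟨(u+v)/2, (u-v)/2, by ring, by ring⟩
  have h1 : 3 * m^2 + (d-s)^2 = 9 := by linarith
  suffices 3/4*(1-s)*(1+3*s) ≤ 2 * ((1+s)/2 - m)^2 + 6 * d^2 by nlinarith
  have hm1 : 1 ≤ m := by linarith
  by_cases hd : 1 ≤ 6 * d^2
  · nlinarith [sq_nonneg (3*s-1), sq_nonneg ((1+s)/2-m)]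
  push Not at hd
  have hd2 : |d| < 1/2 := by
    rw [← sq_lt_sq₀ (abs_nonneg _) (by norm_num), sq_abs]; linarith
  rw [abs_lt] at hd2
  have hds : (d - s)^2 ≤ 9/4 := by nlinarith
  have hm : 3/2 ≤ m := by nlinarith
  nlinarith [mul_nonneg (by linarith : 0 ≤ m - 3/2) (by linarith : 0 ≤ m - (1+s)/2 + (3/2 - (1+s)/2)), sq_nonneg (s - 7/11), sq_nonneg d]

lemma one_small_same (x y z : ℝ) (h : (x-y)^2+(y-z)^2+(x-z)^2 = 18) (hx : |x| < 1) (hy : 1 ≤ y)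
    (hz : 1 ≤ z) :
    ((1 + |x|)/2 + y + z)^2 ≤ 3 * (x^2+y^2+z^2) := by
  wlog hyz : y ≤ z generalizing y z
  · have := this z y (by linarith) hz hy (by linarith)
    linarith
  have hx' := abs_lt.1 hx
  have hz3 : 3 ≤ z - x := by
    by_contra hc
    push Not at hc
    nlinarith [mul_nonneg (by linarith : 0 ≤ z - y) (by linarith : 0 ≤ y - x)]
  have hxa : x^2 = |x|^2 := (sq_abs x).symm
  have h1 : 3 - |x| ≤ z := by linarith [neg_abs_le x]
  rw [hxa]
  have hx0 := abs_nonneg x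
  generalize |x| = a at *
  nlinarith [sq_nonneg ((1+a)/2 - y), sq_nonneg (y-z), sq_nonneg (3*a-1),
    mul_nonneg (by linarith : 0 ≤ z - (1+a)/2 - 1) (by linarith : 0 ≤ z - (1+a)/2 + 1)]

lemma one_small (x y z : ℝ) (h : (x-y)^2+(y-z)^2+(x-z)^2 = 18) (hx : |x| < 1) (hy : 1 ≤ |y|)
    (hz : 1 ≤ |z|) :
    ((1 + |x|)/2 + |y| + |z|)^2 ≤ 3 * (x^2+y^2+z^2) := by
  have opp : ∀ x y z : ℝ, (x-y)^2+(y-z)^2+(x-z)^2 = 18 → |x| < 1 → 1 ≤ y → 1 ≤ -z →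
      ((1 + |x|)/2 + y + -z)^2 ≤ 3 * (x^2+y^2+z^2) := by
    intro x y z h hx hy hz
    rcases abs_cases x with ⟨h1, h2⟩ | ⟨h1, h2⟩
    · rw [h1] at hx ⊢
      have := one_small_opp x y (-z) (by linarith) h2 hx hy hz
      linarith
    · rw [h1] at hx ⊢
      have := one_small_opp (-x) (-z) y (by linarith) (by linarith) hx hz hy
      linarith
  rcases abs_cases y with ⟨h1, h2⟩ | ⟨h1, h2⟩ <;> rcases abs_cases z with ⟨h3, h4⟩ | ⟨h3, h4⟩ <;>
    rw [h1] at hy ⊢ <;> rw [h3] at hz ⊢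
  · exact one_small_same x y z h hx hy hz
  · exact opp x y z h hx hy hz
  · have := opp x z y (by linarith) hx hz hy
    linarith
  · have := one_small_same (-x) (-y) (-z) (by linarith) (by rwa [abs_neg]) hy hz
    rw [abs_neg] at this
    linarith

lemma Gineq (x y z : ℝ) (h : (x-y)^2+(y-z)^2+(x-z)^2 = 18) :
    (G x + G y + G z)^2 ≤ 3 * (x^2+y^2+z^2) := by
  unfold G
  split_ifs with hx hy hz hz hy hz hz
  · rw [abs_lt] at hx hy hz
    nlinarith [mul_pos (by linarith : 0 < 2 - (x-y)) (by linarith : 0 < 2 + (x-y)),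
      mul_pos (by linarith : 0 < 2 - (x-z)) (by linarith : 0 < 2 + (x-z)),
      mul_pos (by linarith : 0 < 2 - (y-z)) (by linarith : 0 < 2 + (y-z))]
  · exact two_small x y z h hx hy (not_lt.1 hz)
  · have := two_small x z y (by linarith) hx hz (not_lt.1 hy)
    linarith
  · exact one_small x y z h hx (not_lt.1 hy) (not_lt.1 hz)
  · have := two_small y z x (by linarith) hy hz (not_lt.1 hx)
    linarith
  · have := one_small y x z (by linarith) hy (not_lt.1 hx) (not_lt.1 hz)
    linarith
  · have := one_small z x y (by linarith) hz (not_lt.1 hx) (not_lt.1 hy)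
    linarith
  · rw [← sq_abs x, ← sq_abs y, ← sq_abs z]
    nlinarith [sq_nonneg (|x|-|y|), sq_nonneg (|x|-|z|), sq_nonneg (|y|-|z|)]

section meas
variable (P : Measure E2) [IsProbabilityMeasure P]

lemma inv_meas (hP : P = (3 : ℝ≥0∞)⁻¹ • (P.map S1 + P.map S2 + P.map S3)) (s : Set E2)
    (hs : MeasurableSet s) :
    P s = 3⁻¹ * (P (S1 ⁻¹' s) + P (S2 ⁻¹' s) + P (S3 ⁻¹' s)) := by
  conv_lhs => rw [hP]
  simp [Measure.map_apply contS1.measurable hs, Measure.map_apply contS2.measurable hs,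
    Measure.map_apply contS3.measurable hs, mul_add]

lemma tail_step (hP : P = (3 : ℝ≥0∞)⁻¹ • (P.map S1 + P.map S2 + P.map S3)) (ε : ℝ) :
    P {x | Real.sqrt 3 / 3 + ε < ‖x - cen‖} ≤ P {x | Real.sqrt 3 / 3 + 3 * ε < ‖x - cen‖} := by
  have hs : MeasurableSet {x : E2 | Real.sqrt 3 / 3 + ε < ‖x - cen‖} :=
    (isOpen_lt (by fun_prop) (by fun_prop)).measurableSet
  rw [inv_meas P hP _ hs]
  set A := P {x | Real.sqrt 3 / 3 + 3 * ε < ‖x - cen‖}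
  have h1 : P (S1 ⁻¹' {x | Real.sqrt 3 / 3 + ε < ‖x - cen‖}) ≤ A := by
    apply measure_mono
    intro x hx
    have := contr x (S1 x) (-1/3) (-Real.sqrt 3 / 9) (by rw [US1]; ring) (by rw [VS1]; ring)
      (by nlinarith [s3])
    simp at hx ⊢; linarith
  have h2 : P (S2 ⁻¹' {x | Real.sqrt 3 / 3 + ε < ‖x - cen‖}) ≤ A := by
    apply measure_mono
    intro x hx
    have := contr x (S2 x) (1/3) (-Real.sqrt 3 / 9) (by rw [US2]) (by rw [VS2]; ring)
      (by nlinarith [s3])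
    simp at hx ⊢; linarith
  have h3 : P (S3 ⁻¹' {x | Real.sqrt 3 / 3 + ε < ‖x - cen‖}) ≤ A := by
    apply measure_mono
    intro x hx
    have := contr x (S3 x) 0 (2 * Real.sqrt 3 / 9) (by rw [US3]; ring) (by rw [VS3])
      (by nlinarith [s3])
    simp at hx ⊢; linarith
  calc _ ≤ (3:ℝ≥0∞)⁻¹ * (A + A + A) := by gcongr
    _ = (3:ℝ≥0∞)⁻¹ * 3 * A := by ring
    _ = A := by rw [ENNReal.inv_mul_cancel (by norm_num) (by norm_num), one_mul]

lemma tail_zero_s5 (hP : P = (3 : ℝ≥0∞)⁻¹ • (P.map S1 + P.map S2 + P.map S3)) (ε : ℝ) (hε : 0 < ε) :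
    P {x | Real.sqrt 3 / 3 + ε < ‖x - cen‖} = 0 := by
  have hn : ∀ n : ℕ, P {x | Real.sqrt 3 / 3 + ε < ‖x - cen‖} ≤
      P {x | Real.sqrt 3 / 3 + 3 ^ n * ε < ‖x - cen‖} := by
    intro n
    induction n with
    | zero => simp
    | succ k ih =>
      refine ih.trans ((tail_step P hP _).trans (le_of_eq ?_))
      congr 1; ext x; simp only [Set.mem_ofPred_eq]
      rw [pow_succ]; ring_nf
  have hlim : Filter.Tendsto (fun n : ℕ => P {x | Real.sqrt 3 / 3 + 3 ^ n * ε < ‖x - cen‖})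
      Filter.atTop (nhds (P (⋂ n : ℕ, {x | Real.sqrt 3 / 3 + 3 ^ n * ε < ‖x - cen‖}))) := by
    apply tendsto_measure_iInter_atTop
    · intro n
      exact (isOpen_lt (by fun_prop) (by fun_prop)).measurableSet.nullMeasurableSet
    · intro m n hmn x hx
      simp only [Set.mem_ofPred_eq] at hx ⊢
      have : (3:ℝ) ^ m * ε ≤ 3 ^ n * ε := by gcongr; norm_num
      linarith
    · exact ⟨0, measure_ne_top _ _⟩
  have hempty : (⋂ n : ℕ, {x : E2 | Real.sqrt 3 / 3 + 3 ^ n * ε < ‖x - cen‖}) = ∅ := by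
    rw [Set.eq_empty_iff_forall_notMem]
    intro x hx
    rw [Set.mem_iInter] at hx
    obtain ⟨n, hn⟩ := pow_unbounded_of_one_lt (‖x - cen‖ / ε) (by norm_num : (1:ℝ) < 3)
    have h := hx n
    simp only [Set.mem_ofPred_eq] at h
    rw [div_lt_iff₀ hε] at hn
    linarith [s3pos]
  rw [hempty, measure_empty] at hlim
  exact le_antisymm (ge_of_tendsto' hlim hn) bot_le

lemma supp (hP : P = (3 : ℝ≥0∞)⁻¹ • (P.map S1 + P.map S2 + P.map S3)) :
    ∀ᵐ x ∂P, x ∈ Metric.closedBall cen (Real.sqrt 3 / 3) := by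
  have : ∀ᵐ x ∂P, ∀ n : ℕ, ¬ (Real.sqrt 3 / 3 + 1 / ((n:ℝ) + 1) < ‖x - cen‖) := by
    rw [ae_all_iff]
    intro n
    have := tail_zero_s5 P hP (1 / ((n:ℝ) + 1)) (by positivity)
    rw [ae_iff]; simpa using this
  filter_upwards [this] with x hx
  rw [mem_closedBall_iff_norm]
  by_contra h
  push Not at h
  obtain ⟨n, hn⟩ := exists_nat_one_div_lt (sub_pos.mpr h)
  exact hx n (by linarith)

lemma supp' (hP : P = (3 : ℝ≥0∞)⁻¹ • (P.map S1 + P.map S2 + P.map S3)) :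
    ∀ᵐ x ∂P, U x ^ 2 + V x ^ 2 ≤ 1/3 := by
  filter_upwards [supp P hP] with x hx
  rw [mem_closedBall_iff_norm] at hx
  rw [← normsq_cen]
  nlinarith [s3, norm_nonneg (x - cen)]

lemma integ (hP : P = (3 : ℝ≥0∞)⁻¹ • (P.map S1 + P.map S2 + P.map S3)) (f : E2 → ℝ)
    (hf : Continuous f) : Integrable f P := by
  have h1 : P.restrict (Metric.closedBall cen (Real.sqrt 3 / 3)) = P :=
    Measure.restrict_eq_self_of_ae_mem (supp P hP)
  rw [← h1]
  exact hf.continuousOn.integrableOn_compact (isCompact_closedBall _ _)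

lemma inv_int (hP : P = (3 : ℝ≥0∞)⁻¹ • (P.map S1 + P.map S2 + P.map S3)) (f : E2 → ℝ)
    (hf : Continuous f) :
    ∫ x, f x ∂P = (∫ x, f (S1 x) ∂P + ∫ x, f (S2 x) ∂P + ∫ x, f (S3 x) ∂P) / 3 := by
  have i1 : Integrable f (P.map S1) :=
    (integrable_map_measure hf.aestronglyMeasurable contS1.aemeasurable).2
      (integ P hP _ (hf.comp contS1))
  have i2 : Integrable f (P.map S2) :=
    (integrable_map_measure hf.aestronglyMeasurable contS2.aemeasurable).2
      (integ P hP _ (hf.comp contS2))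
  have i3 : Integrable f (P.map S3) :=
    (integrable_map_measure hf.aestronglyMeasurable contS3.aemeasurable).2
      (integ P hP _ (hf.comp contS3))
  conv_lhs => rw [hP]
  rw [integral_smul_measure, integral_add_measure (i1.add_measure i2) i3,
    integral_add_measure i1 i2,
    integral_map contS1.aemeasurable hf.aestronglyMeasurable,
    integral_map contS2.aemeasurable hf.aestronglyMeasurable,
    integral_map contS3.aemeasurable hf.aestronglyMeasurable]
  simp; ring

lemma quad0 (hP : P = (3 : ℝ≥0∞)⁻¹ • (P.map S1 + P.map S2 + P.map S3)) (A B C D E F : ℝ) :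
    ∫ x, (A + B * U x + C * V x + D * U x ^ 2 + E * (U x * V x) + F * V x ^ 2) ∂P =
    A + B * ∫ x, U x ∂P + C * ∫ x, V x ∂P + D * ∫ x, U x ^ 2 ∂P + E * ∫ x, U x * V x ∂P
      + F * ∫ x, V x ^ 2 ∂P := by
  have cU := contU
  have cV := contV
  have I : ∀ f : E2 → ℝ, Continuous f → Integrable f P := integ P hP
  rw [integral_add (I _ (by fun_prop)) (I _ (by fun_prop)),
    integral_add (I _ (by fun_prop)) (I _ (by fun_prop)),
    integral_add (I _ (by fun_prop)) (I _ (by fun_prop)),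
    integral_add (I _ (by fun_prop)) (I _ (by fun_prop)),
    integral_add (I _ (by fun_prop)) (I _ (by fun_prop))]
  simp only [integral_const_mul]
  simp

lemma quad (hP : P = (3 : ℝ≥0∞)⁻¹ • (P.map S1 + P.map S2 + P.map S3)) (A B C D E F : ℝ) :
    ∫ x, (A + B * U x + C * V x + D * U x ^ 2 + E * (U x * V x) + F * V x ^ 2) ∂P =
    A + (D + F) / 12 := by
  have cU := contU
  have cV := contV
  have Q := quad0 P hP
  have key : ∀ (f : E2 → ℝ) (A B C D E F : ℝ),
      (∀ x, f x = A + B * U x + C * V x + D * U x ^ 2 + E * (U x * V x) + F * V x ^ 2) →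
      ∫ x, f x ∂P = A + B * ∫ x, U x ∂P + C * ∫ x, V x ∂P + D * ∫ x, U x ^ 2 ∂P
        + E * ∫ x, U x * V x ∂P + F * ∫ x, V x ^ 2 ∂P := by
    intro f A B C D E F h
    rw [← Q]; congr 1; ext x; exact h x
  have hU := inv_int P hP (fun x => U x) (by fun_prop)
  have hV := inv_int P hP (fun x => V x) (by fun_prop)
  have hUU := inv_int P hP (fun x => U x ^ 2) (by fun_prop)
  have hUV := inv_int P hP (fun x => U x * V x) (by fun_prop)
  have hVV := inv_int P hP (fun x => V x ^ 2) (by fun_prop)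
  simp only [US1, US2, US3, VS1, VS2, VS3] at hU hV hUU hUV hVV
  rw [key (fun x => U x / 3 - 1/3) (-1/3) (1/3) 0 0 0 0 (fun x => by ring),
    key (fun x => U x / 3 + 1/3) (1/3) (1/3) 0 0 0 0 (fun x => by ring),
    key (fun x => U x / 3) 0 (1/3) 0 0 0 0 (fun x => by ring)] at hU
  rw [key (fun x => V x / 3 - Real.sqrt 3 / 9) (-Real.sqrt 3 / 9) 0 (1/3) 0 0 0 (fun x => by ring),
    key (fun x => V x / 3 + 2 * Real.sqrt 3 / 9) (2 * Real.sqrt 3 / 9) 0 (1/3) 0 0 0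
      (fun x => by ring)] at hV
  rw [key (fun x => (U x / 3 - 1/3) ^ 2) (1/9) (-2/9) 0 (1/9) 0 0 (fun x => by ring),
    key (fun x => (U x / 3 + 1/3) ^ 2) (1/9) (2/9) 0 (1/9) 0 0 (fun x => by ring),
    key (fun x => (U x / 3) ^ 2) 0 0 0 (1/9) 0 0 (fun x => by ring)] at hUU
  rw [key (fun x => (U x / 3 - 1/3) * (V x / 3 - Real.sqrt 3 / 9)) (Real.sqrt 3 / 27)
      (-Real.sqrt 3 / 27) (-1/9) 0 (1/9) 0 (fun x => by ring),
    key (fun x => (U x / 3 + 1/3) * (V x / 3 - Real.sqrt 3 / 9)) (-Real.sqrt 3 / 27)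
      (-Real.sqrt 3 / 27) (1/9) 0 (1/9) 0 (fun x => by ring),
    key (fun x => (U x / 3) * (V x / 3 + 2 * Real.sqrt 3 / 9)) 0 (2 * Real.sqrt 3 / 27) 0 0 (1/9) 0
      (fun x => by ring)] at hUV
  rw [key (fun x => (V x / 3 - Real.sqrt 3 / 9) ^ 2) (1/27) 0 (-2 * Real.sqrt 3 / 27) 0 0 (1/9)
      (fun x => by linear_combination (1/81) * s3),
    key (fun x => (V x / 3 + 2 * Real.sqrt 3 / 9) ^ 2) (4/27) 0 (4 * Real.sqrt 3 / 27) 0 0 (1/9)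
      (fun x => by linear_combination (4/81) * s3)] at hVV
  have eU : ∫ x, U x ∂P = 0 := by linarith
  have eV : ∫ x, V x ∂P = 0 := by linarith
  rw [eU, eV] at hUU hUV hVV
  have eUU : ∫ x, U x ^ 2 ∂P = 1/12 := by linarith
  have eUV : ∫ x, U x * V x ∂P = 0 := by linarith
  have eVV : ∫ x, V x ^ 2 ∂P = 1/12 := by linarith
  rw [Q, eU, eV, eUU, eUV, eVV]; ring

/-- a version of `quad` for functions only pointwise equal to a quadratic -/
lemma quad' (hP : P = (3 : ℝ≥0∞)⁻¹ • (P.map S1 + P.map S2 + P.map S3)) (f : E2 → ℝ)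
    (A B C D E F : ℝ)
    (h : ∀ x, f x = A + B * U x + C * V x + D * U x ^ 2 + E * (U x * V x) + F * V x ^ 2) :
    ∫ x, f x ∂P = A + (D + F) / 12 := by
  rw [← quad P hP A B C D E F]; congr 1; ext x; exact h x


lemma piece (hP : P = (3 : ℝ≥0∞)⁻¹ • (P.map S1 + P.map S2 + P.map S3)) (p q y : ℝ)
    (hpq : p ^ 2 + q ^ 2 = 1) :
    ∫ x, |Real.sqrt 3 * (p * U x + q * V x) + y| ∂P ≤ G y := by
  have cU := contU
  have cV := contV
  have hb : ∀ x, U x ^ 2 + V x ^ 2 ≤ 1/3 → |Real.sqrt 3 * (p * U x + q * V x)| ≤ 1 := by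
    intro x hx
    rw [← sq_le_one_iff_abs_le_one]
    have : (p * U x + q * V x) ^ 2 ≤ 1/3 := by
      nlinarith [sq_nonneg (p * V x - q * U x), hpq]
    rw [mul_pow, s3]; linarith
  have hx2 : ∀ x, (Real.sqrt 3 * (p * U x + q * V x)) ^ 2
      = 0 + 0 * U x + 0 * V x + 3 * p ^ 2 * U x ^ 2 + 6 * p * q * (U x * V x)
        + 3 * q ^ 2 * V x ^ 2 := by
    intro x; rw [mul_pow, s3]; ring
  unfold G
  split_ifs with hy
  · -- sign σ
    obtain ⟨σ, hσ, hσy⟩ : ∃ σ : ℝ, (σ = 1 ∨ σ = -1) ∧ σ * |y| = y := by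
      rcases le_total 0 y with h | h
      · exact ⟨1, Or.inl rfl, by rw [abs_of_nonneg h]; ring⟩
      · exact ⟨-1, Or.inr rfl, by rw [abs_of_nonpos h]; ring⟩
    set s := |y| with hs
    have s0 : 0 ≤ s := abs_nonneg y
    have hI : ∫ x, ((1 - s) * ((Real.sqrt 3 * (p * U x + q * V x)) ^ 2 + 1/4)
        + s * (σ * (Real.sqrt 3 * (p * U x + q * V x)) + 1)) ∂P = (1 + s) / 2 := by
      rw [quad' P hP _ ((1 - s) / 4 + s) (s * σ * Real.sqrt 3 * p) (s * σ * Real.sqrt 3 * q)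
        ((1 - s) * (3 * p ^ 2)) ((1 - s) * (6 * p * q)) ((1 - s) * (3 * q ^ 2))
        (fun x => by rw [hx2]; ring)]
      linear_combination (1 - s) / 4 * hpq
    rw [← hI]
    refine integral_mono_ae (integ P hP _ (by fun_prop)) (integ P hP _ (by fun_prop)) ?_
    filter_upwards [supp' P hP] with x hx
    have hX := hb x hx
    generalize Real.sqrt 3 * (p * U x + q * V x) = X at hX ⊢
    rw [abs_le] at hX
    have hA : |X| ≤ X ^ 2 + 1/4 := by
      rw [abs_le]; constructor <;> nlinarith [sq_nonneg (X - 1/2), sq_nonneg (X + 1/2)]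
    have hB : |X + σ| = σ * X + 1 := by
      rcases hσ with rfl | rfl
      · rw [abs_of_nonneg (by linarith)]; ring
      · rw [abs_of_nonpos (by linarith)]; ring
    calc |X + y| = |(1 - s) * X + s * (X + σ)| := by rw [← hσy]; ring_nf
      _ ≤ |(1 - s) * X| + |s * (X + σ)| := abs_add_le _ _
      _ = (1 - s) * |X| + s * (σ * X + 1) := by
        rw [abs_mul, abs_mul, hB, abs_of_nonneg s0, abs_of_nonneg (by linarith : 0 ≤ 1 - s)]
      _ ≤ _ := by
        have : 0 ≤ 1 - s := by linarith
        gcongr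
  · push Not at hy
    obtain ⟨σ, hσ, hσy⟩ : ∃ σ : ℝ, (σ = 1 ∨ σ = -1) ∧ σ * y = |y| := by
      rcases le_total 0 y with h | h
      · exact ⟨1, Or.inl rfl, by rw [abs_of_nonneg h]; ring⟩
      · exact ⟨-1, Or.inr rfl, by rw [abs_of_nonpos h]; ring⟩
    have hI : ∫ x, (σ * (Real.sqrt 3 * (p * U x + q * V x) + y)) ∂P = |y| := by
      rw [quad' P hP _ (σ * y) (σ * Real.sqrt 3 * p) (σ * Real.sqrt 3 * q) 0 0 0
        (fun x => by ring)]
      rw [hσy]; ring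
    rw [← hI]
    refine integral_mono_ae (integ P hP _ (by fun_prop)) (integ P hP _ (by fun_prop)) ?_
    filter_upwards [supp' P hP] with x hx
    have hX := hb x hx
    generalize Real.sqrt 3 * (p * U x + q * V x) = X at hX ⊢
    rw [abs_le] at hX
    rcases hσ with rfl | rfl
    · rw [abs_of_nonneg (by linarith)]; linarith
    · rw [abs_of_nonpos (by linarith)]; linarith

lemma absint (hP : P = (3 : ℝ≥0∞)⁻¹ • (P.map S1 + P.map S2 + P.map S3)) (p q t : ℝ)
    (hpq : p ^ 2 + q ^ 2 = 1) :
    (∫ x, |p * U x + q * V x - t| ∂P) ^ 2 ≤ t ^ 2 + 2/27 := by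
  have cU := contU
  have cV := contV
  have h := inv_int P hP (fun x => |p * U x + q * V x - t|) (by fun_prop)
  simp only [US1, US2, US3, VS1, VS2, VS3] at h
  have key : ∀ (f : E2 → ℝ) (y : ℝ),
      (∀ x, f x = Real.sqrt 3 / 9 * (Real.sqrt 3 * (p * U x + q * V x) + y)) →
      ∫ x, |f x| ∂P ≤ Real.sqrt 3 / 9 * G y := by
    intro f y hf
    have e : (fun x => |f x|)
        = fun x => Real.sqrt 3 / 9 * |Real.sqrt 3 * (p * U x + q * V x) + y| := by
      ext x
      rw [hf, abs_mul, abs_of_pos (by linarith [s3pos] : 0 < Real.sqrt 3 / 9)]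
    rw [e, integral_const_mul]
    exact mul_le_mul_of_nonneg_left (piece P hP p q y hpq) (by linarith [s3pos])
  have k1 := key (fun x => p * (U x / 3 - 1 / 3) + q * (V x / 3 - Real.sqrt 3 / 9) - t)
    (-(Real.sqrt 3 * p) - q - 3 * Real.sqrt 3 * t)
    (fun x => by linear_combination (-(p * U x + q * V x) / 9 + p / 9 + t / 3) * s3)
  have k2 := key (fun x => p * (U x / 3 + 1 / 3) + q * (V x / 3 - Real.sqrt 3 / 9) - t)
    (Real.sqrt 3 * p - q - 3 * Real.sqrt 3 * t)
    (fun x => by linear_combination (-(p * U x + q * V x) / 9 - p / 9 + t / 3) * s3)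
  have k3 := key (fun x => p * (U x / 3) + q * (V x / 3 + 2 * Real.sqrt 3 / 9) - t)
    (2 * q - 3 * Real.sqrt 3 * t)
    (fun x => by linear_combination (-(p * U x + q * V x) / 9 + t / 3) * s3)
  have g := Gineq (-(Real.sqrt 3 * p) - q - 3 * Real.sqrt 3 * t)
    (Real.sqrt 3 * p - q - 3 * Real.sqrt 3 * t) (2 * q - 3 * Real.sqrt 3 * t)
    (by linear_combination 18 * hpq + 6 * p ^ 2 * s3)
  have e3 : 3 * ((-(Real.sqrt 3 * p) - q - 3 * Real.sqrt 3 * t) ^ 2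
      + (Real.sqrt 3 * p - q - 3 * Real.sqrt 3 * t) ^ 2 + (2 * q - 3 * Real.sqrt 3 * t) ^ 2)
      = 243 * t ^ 2 + 18 := by
    linear_combination 18 * hpq + (6 * p ^ 2 + 81 * t ^ 2) * s3
  rw [e3] at g
  have h0 : 0 ≤ ∫ x, |p * U x + q * V x - t| ∂P := integral_nonneg (fun x => abs_nonneg _)
  have hle : ∫ x, |p * U x + q * V x - t| ∂P ≤ Real.sqrt 3 / 27 *
      (G (-(Real.sqrt 3 * p) - q - 3 * Real.sqrt 3 * t) +
      G (Real.sqrt 3 * p - q - 3 * Real.sqrt 3 * t) + G (2 * q - 3 * Real.sqrt 3 * t)) := by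
    rw [h]; linarith
  refine (pow_le_pow_left₀ h0 hle 2).trans ?_
  rw [mul_pow, div_pow, s3]
  linarith

lemma lower (hP : P = (3 : ℝ≥0∞)⁻¹ • (P.map S1 + P.map S2 + P.map S3)) (a b : E2) :
    5 / 54 ≤ ∫ x, min (‖x - a‖ ^ 2) (‖x - b‖ ^ 2) ∂P := by
  have cU := contU
  have cV := contV
  obtain ⟨D, p, q, hpq, hp, hq⟩ : ∃ D p q : ℝ, p ^ 2 + q ^ 2 = 1 ∧
      U a - U b = D * p ∧ V a - V b = D * q := by
    by_cases h0 : (U a - U b) ^ 2 + (V a - V b) ^ 2 = 0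
    · refine ⟨0, 1, 0, by norm_num, ?_, ?_⟩ <;> nlinarith [sq_nonneg (U a - U b), sq_nonneg (V a - V b)]
    · have hpos : 0 < (U a - U b) ^ 2 + (V a - V b) ^ 2 := lt_of_le_of_ne (by positivity) (Ne.symm h0)
      have hD := Real.sqrt_pos.2 hpos
      have hD2 := Real.sq_sqrt hpos.le
      set D := Real.sqrt ((U a - U b) ^ 2 + (V a - V b) ^ 2)
      refine ⟨D, (U a - U b) / D, (V a - V b) / D, ?_, ?_, ?_⟩
      · field_simp; linarith
      · field_simp
      · field_simp
  set m := (U a + U b) / 2 with hm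
  set n := (V a + V b) / 2 with hn
  have ha : U a = m + D / 2 * p := by rw [hm]; linarith
  have hb : U b = m - D / 2 * p := by rw [hm]; linarith
  have ha' : V a = n + D / 2 * q := by rw [hn]; linarith
  have hb' : V b = n - D / 2 * q := by rw [hn]; linarith
  have hdist : ∀ x c : E2, ‖x - c‖ ^ 2 = (U x - U c) ^ 2 + (V x - V c) ^ 2 := by
    intro x c; rw [normsq]; simp [U, V]
  have hpt : ∀ x, min (‖x - a‖ ^ 2) (‖x - b‖ ^ 2) =
      ((m ^ 2 + n ^ 2 + D ^ 2 / 4) + (-2 * m) * U x + (-2 * n) * V x + 1 * U x ^ 2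
        + 0 * (U x * V x) + 1 * V x ^ 2) - |D| * |p * U x + q * V x - (p * m + q * n)| := by
    intro x
    rw [hdist, hdist, ha, hb, ha', hb', ← abs_mul, min_def]
    split_ifs with h
    · rw [abs_of_nonneg (by linarith)]
      linear_combination D ^ 2 / 4 * hpq
    · rw [abs_of_nonpos (by linarith)]
      linear_combination D ^ 2 / 4 * hpq
  simp_rw [hpt]
  rw [integral_sub (integ P hP _ (by fun_prop)) (integ P hP _ (by fun_prop)),
    quad P hP, integral_const_mul]
  have hI := absint P hP p q (p * m + q * n) hpq
  set I := ∫ x, |p * U x + q * V x - (p * m + q * n)| ∂P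
  have : (p * m + q * n) ^ 2 ≤ m ^ 2 + n ^ 2 := by
    nlinarith [sq_nonneg (p * n - q * m)]
  nlinarith [sq_nonneg (|D| / 2 - I), sq_abs D]

lemma err_pair (hP : P = (3 : ℝ≥0∞)⁻¹ • (P.map S1 + P.map S2 + P.map S3)) (a b : E2) :
    err P {a, b} = ENNReal.ofReal (∫ x, min (‖x - a‖ ^ 2) (‖x - b‖ ^ 2) ∂P) := by
  rw [ofReal_integral_eq_lintegral_ofReal (integ P hP _ (by fun_prop))
    (Filter.Eventually.of_forall fun x => by positivity)]
  unfold err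
  congr 1; ext x
  rw [iInf_pair, ENNReal.ofReal_min]

lemma lower_err (hP : P = (3 : ℝ≥0∞)⁻¹ • (P.map S1 + P.map S2 + P.map S3)) (α : Set E2)
    (hf : α.Finite) (hc : α.ncard ≤ 2) : ENNReal.ofReal (5/54) ≤ err P α := by
  obtain ⟨a, b, hab⟩ : ∃ a b : E2, α ⊆ {a, b} := by
    have : α.ncard = 0 ∨ α.ncard = 1 ∨ α.ncard = 2 := by omega
    rcases this with h | h | h
    · rw [Set.ncard_eq_zero hf] at h
      exact ⟨0, 0, by simp [h]⟩
    · obtain ⟨a, rfl⟩ := Set.ncard_eq_one.1 h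
      exact ⟨a, a, by simp⟩
    · obtain ⟨a, b, _, rfl⟩ := Set.ncard_eq_two.1 h
      exact ⟨a, b, le_rfl⟩
  calc ENNReal.ofReal (5/54) ≤ err P {a, b} := by
        rw [err_pair P hP]; exact ENNReal.ofReal_le_ofReal (lower P hP a b)
    _ ≤ err P α := lintegral_mono fun x => biInf_mono hab

lemma upper (hP : P = (3 : ℝ≥0∞)⁻¹ • (P.map S1 + P.map S2 + P.map S3)) (a b : E2)
    (h : ∫ x, min (‖x - a‖ ^ 2) (‖x - b‖ ^ 2) ∂P ≤ 5 / 54) :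
    IsOptimal P 2 {a, b} ∧ quantErr P 2 = 5 / 54 := by
  have e : ENNReal.ofReal (5/54) = 5/54 := by
    rw [ENNReal.ofReal_div_of_pos (by norm_num)]; norm_num
  have hle : err P {a, b} ≤ 5 / 54 := by
    rw [err_pair P hP, ← e]; exact ENNReal.ofReal_le_ofReal h
  have hfin : ({a, b} : Set E2).Finite := Set.toFinite _
  have hcard : ({a, b} : Set E2).ncard ≤ 2 := by
    simpa using Set.ncard_insert_le a {b}
  have hq : quantErr P 2 = 5 / 54 := by
    apply le_antisymm
    · exact (iInf₂_le _ ⟨hfin, hcard⟩).trans hle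
    · refine le_iInf₂ fun α hα => ?_
      rw [← e]; exact lower_err P hP α hα.1 hα.2
  refine ⟨⟨hfin, hcard, ?_⟩, hq⟩
  rw [hq]
  refine le_antisymm hle ?_
  rw [← e]; exact lower_err P hP _ hfin hcard

lemma dist_pt (x : E2) (u v : ℝ) :
    ‖x - pt (u + 1/2) (v + Real.sqrt 3 / 6)‖ ^ 2 = (U x - u) ^ 2 + (V x - v) ^ 2 := by
  rw [normsq]; simp [U, V]; ring

lemma mean_sq (hP : P = (3 : ℝ≥0∞)⁻¹ • (P.map S1 + P.map S2 + P.map S3)) (u v : ℝ) :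
    ∫ x, ((U x / 3 + u) ^ 2 + (V x / 3 + v) ^ 2) ∂P = 1/54 + u ^ 2 + v ^ 2 := by
  rw [quad' P hP _ (u ^ 2 + v ^ 2) (2 / 3 * u) (2 / 3 * v) (1/9) 0 (1/9) (fun x => by ring)]
  ring

lemma mono_piece (hP : P = (3 : ℝ≥0∞)⁻¹ • (P.map S1 + P.map S2 + P.map S3)) (f : E2 → ℝ)
    (hf : Continuous f) (u v : ℝ) (h : ∀ x, f x ≤ (U x / 3 + u) ^ 2 + (V x / 3 + v) ^ 2) :
    ∫ x, f x ∂P ≤ 1/54 + u ^ 2 + v ^ 2 := by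
  have cU := contU
  have cV := contV
  rw [← mean_sq P hP]
  exact integral_mono (integ P hP _ hf) (integ P hP _ (by fun_prop)) h

lemma upper1 (hP : P = (3 : ℝ≥0∞)⁻¹ • (P.map S1 + P.map S2 + P.map S3)) :
    ∫ x, min (‖x - pt (-1/3 + 1/2) (-Real.sqrt 3 / 9 + Real.sqrt 3 / 6)‖ ^ 2)
      (‖x - pt (1/6 + 1/2) (Real.sqrt 3 / 18 + Real.sqrt 3 / 6)‖ ^ 2) ∂P ≤ 5 / 54 := by
  have cU := contU
  have cV := contV
  simp_rw [dist_pt]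
  rw [inv_int P hP _ (by fun_prop)]
  simp only [US1, US2, US3, VS1, VS2, VS3]
  refine (div_le_div_of_nonneg_right (add_le_add (add_le_add
    (mono_piece P hP _ (by fun_prop) (0) (0)
      (fun x => (min_le_left _ _).trans (le_of_eq (by ring))))
    (mono_piece P hP _ (by fun_prop) (1/6) (-Real.sqrt 3 / 6)
      (fun x => (min_le_right _ _).trans (le_of_eq (by ring)))))
    (mono_piece P hP _ (by fun_prop) (-1/6) (Real.sqrt 3 / 6)
      (fun x => (min_le_right _ _).trans (le_of_eq (by ring)))))
    (by norm_num : (0:ℝ) ≤ 3)).trans ?_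
  linarith [s3]

lemma upper2 (hP : P = (3 : ℝ≥0∞)⁻¹ • (P.map S1 + P.map S2 + P.map S3)) :
    ∫ x, min (‖x - pt (1/3 + 1/2) (-Real.sqrt 3 / 9 + Real.sqrt 3 / 6)‖ ^ 2)
      (‖x - pt (-1/6 + 1/2) (Real.sqrt 3 / 18 + Real.sqrt 3 / 6)‖ ^ 2) ∂P ≤ 5 / 54 := by
  have cU := contU
  have cV := contV
  simp_rw [dist_pt]
  rw [inv_int P hP _ (by fun_prop)]
  simp only [US1, US2, US3, VS1, VS2, VS3]
  refine (div_le_div_of_nonneg_right (add_le_add (add_le_add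
    (mono_piece P hP _ (by fun_prop) (-1/6) (-Real.sqrt 3 / 6)
      (fun x => (min_le_right _ _).trans (le_of_eq (by ring))))
    (mono_piece P hP _ (by fun_prop) (0) (0)
      (fun x => (min_le_left _ _).trans (le_of_eq (by ring)))))
    (mono_piece P hP _ (by fun_prop) (1/6) (Real.sqrt 3 / 6)
      (fun x => (min_le_right _ _).trans (le_of_eq (by ring)))))
    (by norm_num : (0:ℝ) ≤ 3)).trans ?_
  linarith [s3]

end meas

end RM

/-- The sets {(1/6, 1/(6√3)), (2/3, 2/(3√3))} and {(5/6, 1/(6√3)), (1/3, 2/(3√3))} are each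
optimal sets of two-means for the R-measure P, with quantization error V₂(P) = 5/54. -/
theorem stmt_5 (P : Measure E2) [IsProbabilityMeasure P]
    (hP : P = (3 : ℝ≥0∞)⁻¹ • (P.map S1 + P.map S2 + P.map S3)) :
    IsOptimal P 2 {pt (1/6) (1 / (6 * Real.sqrt 3)), pt (2/3) (2 / (3 * Real.sqrt 3))}
      ∧ IsOptimal P 2 {pt (5/6) (1 / (6 * Real.sqrt 3)), pt (1/3) (2 / (3 * Real.sqrt 3))}
      ∧ quantErr P 2 = 5 / 54 := by
  have e1 : 1 / (6 * Real.sqrt 3) = -Real.sqrt 3 / 9 + Real.sqrt 3 / 6 := by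
    have := RM.s3pos
    field_simp; linarith [RM.s3]
  have e2 : 2 / (3 * Real.sqrt 3) = Real.sqrt 3 / 18 + Real.sqrt 3 / 6 := by
    have := RM.s3pos
    field_simp; linarith [RM.s3]
  have h1 := RM.upper P hP _ _ (RM.upper1 P hP)
  have h2 := RM.upper P hP _ _ (RM.upper2 P hP)
  rw [← e1, ← e2] at h1 h2
  norm_num only at h1 h2 ⊢
  exact ⟨h1.1, h2.1, h1.2⟩

end
end
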